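/- Let M₁, M₂ be ω-saturated Θ-models, let t ∈ U₁ and t' ∈ U₂ be such that tp_x(M₁,t) ⊆ tp_x(M₂,t'), and let x be a variable. Define A = {(a,b) : for some p,q with {p,q} = {1,2}, a ∈ U_p, b ∈ U_q and tp_x(M_p,a) ⊆ tp_x(M_q,b)} and B = {(a,b) : for some p,q with {p,q} = {1,2}, a ∈ U_p, b ∈ U_q and imp_x(M_q,b) ⊆ imp_x(M_p,a)}. Then (A,B) is a (2,2)-modal ⟨(M₁,t),(M₂,t')⟩-asimulation. -/

import Mathlib

/-!
Each asimulation clause asks for a successor of a given point, along `R`, `R_◇` or `R` followed by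
`R_□`, that meets a set of first-order conditions. By `ω`-saturation it suffices to meet finitely
many of them at a time: Łoś's theorem for an ultrapower indexed by the finite sets of conditions
provides the consistency that saturation asks for. Finitely many conditions amount to a single modal
formula:

* (step): if the `P` are true and the `Q` false at `d`, then `b` refutes `⋀P → ⋁Q`, hence so does
  `a`, and the refuting successor of `a` is the one sought;
* (box-2) and (diam-2(1)): the same with `□⋁Q` and `◇⋁Q`, where the `Q` are false at the given
  point, or in the latter case at all its `R_◇`-successors;
* (diam-2(2)): if `P` is a finite part of the type of an `R_◇`-successor of `a`, then `⋀P` is not in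
  the `imp_x` of `a`, hence not in that of `b`, so some `R_◇`-successor of `b` satisfies it.
-/

namespace ModalIntAsim

/-- Binary relation symbols of the correspondence vocabulary: R, R_□, R_◇. -/
inductive RelSym : Type
  | r | box | diam
deriving DecidableEq

/-- Formulas of the correspondence language: classical first-order logic without
identity, with variables indexed by `ℕ`, unary predicate letters `P n` (n : ℕ),
and the three binary relation symbols. -/
inductive FOForm : Type
  | falsum : FOForm
  | pred : ℕ → ℕ → FOForm            -- `pred n v` is `P_n(x_v)`
  | rel : RelSym → ℕ → ℕ → FOForm    -- `rel s v w` is `S(x_v, x_w)`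
  | conj : FOForm → FOForm → FOForm
  | disj : FOForm → FOForm → FOForm
  | impl : FOForm → FOForm → FOForm
  | all : ℕ → FOForm → FOForm
  | ex : ℕ → FOForm → FOForm

namespace FOForm

/-- Free variables of a correspondence formula. -/
def freeVars : FOForm → Finset ℕ
  | falsum => ∅
  | pred _ v => {v}
  | rel _ v w => {v, w}
  | conj f g => f.freeVars ∪ g.freeVars
  | disj f g => f.freeVars ∪ g.freeVars
  | impl f g => f.freeVars ∪ g.freeVars
  | all v f => f.freeVars \ {v}
  | ex v f => f.freeVars \ {v}

/-- The unary predicate letters occurring in a formula (the binary relation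
symbols R, R_□, R_◇ are regarded as belonging to every vocabulary Σ_φ). -/
def predLetters : FOForm → Finset ℕ
  | falsum => ∅
  | pred n _ => {n}
  | rel _ _ _ => ∅
  | conj f g => f.predLetters ∪ g.predLetters
  | disj f g => f.predLetters ∪ g.predLetters
  | impl f g => f.predLetters ∪ g.predLetters
  | all _ f => f.predLetters
  | ex _ f => f.predLetters

/-- Degree of a formula: the greatest number of nested quantifiers. -/
def degree : FOForm → ℕ
  | falsum => 0
  | pred _ _ => 0
  | rel _ _ _ => 0
  | conj f g => max f.degree g.degree
  | disj f g => max f.degree g.degree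
  | impl f g => max f.degree g.degree
  | all _ f => f.degree + 1
  | ex _ f => f.degree + 1

end FOForm

/-- A model of the correspondence language: a domain together with
interpretations of R, R_□, R_◇ and of the unary predicate letters.
(A Θ-model only consults the letters in Θ.) -/
structure Model : Type 1 where
  U : Type
  rel : U → U → Prop
  relBox : U → U → Prop
  relDiam : U → U → Prop
  pred : ℕ → U → Prop

/-- Interpretation of a binary relation symbol in a model. -/
def Model.relOf (M : Model) : RelSym → M.U → M.U → Prop
  | .r => M.rel
  | .box => M.relBox
  | .diam => M.relDiam

/-- Tarskian satisfaction of a formula in a model under an assignment. -/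
def Sat (M : Model) : FOForm → (ℕ → M.U) → Prop
  | .falsum, _ => False
  | .pred n v, α => M.pred n (α v)
  | .rel s v w, α => M.relOf s (α v) (α w)
  | .conj f g, α => Sat M f α ∧ Sat M g α
  | .disj f g, α => Sat M f α ∨ Sat M g α
  | .impl f g, α => Sat M f α → Sat M g α
  | .all v f, α => ∀ u : M.U, Sat M f (Function.update α v u)
  | .ex v f, α => ∃ u : M.U, Sat M f (Function.update α v u)

/-- `M, a ⊨ φ(x)`: φ is true in `M` under any assignment sending `x` to `a`. -/
def SatAt (M : Model) (a : M.U) (x : ℕ) (φ : FOForm) : Prop :=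
  ∀ α : ℕ → M.U, α x = a → Sat M φ α

/-- Logical equivalence of correspondence formulas. -/
def Equiv (φ ψ : FOForm) : Prop :=
  ∀ (M : Model) (α : ℕ → M.U), Sat M φ α ↔ Sat M ψ α

/-- Logical entailment between correspondence formulas. -/
def Entails (φ ψ : FOForm) : Prop :=
  ∀ (M : Model) (α : ℕ → M.U), Sat M φ α → Sat M ψ α

/-- Modal intuitionistic formulas: built from propositional letters `p n`
using ⊥, ∧, ∨, →, □, ◇. -/
inductive MForm : Type
  | bot : MForm
  | prop : ℕ → MForm
  | conj : MForm → MForm → MForm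
  | disj : MForm → MForm → MForm
  | impl : MForm → MForm → MForm
  | box : MForm → MForm
  | diam : MForm → MForm

/-- The (i,j)-standard x-translation `ST_ij`.  `boxOne = true` means the box
clause (□₁) is used (i = 1), `boxOne = false` means (□₂) (i = 2); likewise
`diamOne = true` means the diamond clause (◇₁) (j = 1) and `diamOne = false`
means (◇₂) (j = 2).  Bound variables are chosen fresh as `x+1`, `x+2`. -/
def ST (boxOne diamOne : Bool) : MForm → ℕ → FOForm
  | .bot, _ => .falsum
  | .prop n, x => .pred n x
  | .conj I J, x => .conj (ST boxOne diamOne I x) (ST boxOne diamOne J x)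
  | .disj I J, x => .disj (ST boxOne diamOne I x) (ST boxOne diamOne J x)
  | .impl I J, x =>
      .all (x + 1) (.impl (.rel .r x (x + 1))
        (.impl (ST boxOne diamOne I (x + 1)) (ST boxOne diamOne J (x + 1))))
  | .box I, x =>
      if boxOne then
        .all (x + 1) (.impl (.rel .box x (x + 1)) (ST boxOne diamOne I (x + 1)))
      else
        .all (x + 1) (.impl (.rel .r x (x + 1))
          (.all (x + 2) (.impl (.rel .box (x + 1) (x + 2)) (ST boxOne diamOne I (x + 2)))))
  | .diam I, x =>
      if diamOne then
        .ex (x + 1) (.conj (.rel .diam x (x + 1)) (ST boxOne diamOne I (x + 1)))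
      else
        .all (x + 1) (.impl (.rel .r x (x + 1))
          (.ex (x + 2) (.conj (.rel .diam (x + 1) (x + 2)) (ST boxOne diamOne I (x + 2)))))

/-! ### Conditions on relations between tuples (the k-asimulation conditions).
A relation between the two models is represented by its two directed
components; `N` is the model of the source tuple and `P` that of the target
tuple.  A tuple `(ā_m, a)` is represented as the list `as ++ [a]`, with
`m = as.length`. -/

section TupleConds

variable (N P : Model)

/-- The "p-type" condition: related tuples are nonempty and of equal length. -/
def TypeCond (A : List N.U → List P.U → Prop) : Prop :=
  ∀ as bs, A as bs → as ≠ [] ∧ as.length = bs.length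

/-- (p-base). -/
def BaseCond (Θ : Set ℕ) (A : List N.U → List P.U → Prop) : Prop :=
  ∀ (as : List N.U) (bs : List P.U) (a : N.U) (b : P.U),
    A (as ++ [a]) (bs ++ [b]) → ∀ n ∈ Θ, N.pred n a → P.pred n b

/-- (p-step). -/
def StepCond (k : ℕ) (A : List N.U → List P.U → Prop)
    (Arev : List P.U → List N.U → Prop) : Prop :=
  ∀ (as : List N.U) (bs : List P.U) (a : N.U) (b d : P.U),
    A (as ++ [a]) (bs ++ [b]) → P.rel b d → as.length < k →
    ∃ c : N.U, N.rel a c ∧ A (as ++ [a, c]) (bs ++ [b, d]) ∧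
      Arev (bs ++ [b, d]) (as ++ [a, c])

/-- (p-box-1). -/
def Box1Cond (k : ℕ) (A : List N.U → List P.U → Prop) : Prop :=
  ∀ (as : List N.U) (bs : List P.U) (a : N.U) (b d : P.U),
    A (as ++ [a]) (bs ++ [b]) → P.relBox b d → as.length < k →
    ∃ c : N.U, N.relBox a c ∧ A (as ++ [a, c]) (bs ++ [b, d])

/-- (p-box-2). -/
def Box2Cond (k : ℕ) (A : List N.U → List P.U → Prop) : Prop :=
  ∀ (as : List N.U) (bs : List P.U) (a : N.U) (b d f : P.U),
    A (as ++ [a]) (bs ++ [b]) → P.rel b d → P.relBox d f → as.length + 1 < k →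
    ∃ c e : N.U, N.rel a c ∧ N.relBox c e ∧ A (as ++ [a, c, e]) (bs ++ [b, d, f])

/-- (p-diam-1). -/
def Diam1Cond (k : ℕ) (A : List N.U → List P.U → Prop) : Prop :=
  ∀ (as : List N.U) (bs : List P.U) (a c : N.U) (b : P.U),
    A (as ++ [a]) (bs ++ [b]) → N.relDiam a c → as.length < k →
    ∃ d : P.U, P.relDiam b d ∧ A (as ++ [a, c]) (bs ++ [b, d])

/-- (p-diam-2(1)). -/
def Diam2aCond (k : ℕ) (A B : List N.U → List P.U → Prop) : Prop :=
  ∀ (as : List N.U) (bs : List P.U) (a : N.U) (b d : P.U),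
    A (as ++ [a]) (bs ++ [b]) → P.rel b d → as.length + 1 < k →
    ∃ c : N.U, N.rel a c ∧ B (as ++ [a, c]) (bs ++ [b, d])

/-- (p-diam-2(2)). -/
def Diam2bCond (k : ℕ) (B A : List N.U → List P.U → Prop) : Prop :=
  ∀ (as : List N.U) (bs : List P.U) (a c : N.U) (b : P.U),
    B (as ++ [a]) (bs ++ [b]) → N.relDiam a c → as.length < k →
    ∃ d : P.U, P.relDiam b d ∧ A (as ++ [a, c]) (bs ++ [b, d])

end TupleConds

/-- An (i,1)-modal ⟨(M₁,t),(M₂,u)⟩_k-asimulation (j = 1): a single relation `A`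
given by its two directed components `A12`, `A21`. -/
def IsKAsimD1 (boxOne : Bool) (Θ : Set ℕ) (M₁ M₂ : Model) (t : M₁.U) (u : M₂.U) (k : ℕ)
    (A12 : List M₁.U → List M₂.U → Prop) (A21 : List M₂.U → List M₁.U → Prop) : Prop :=
  TypeCond M₁ M₂ A12 ∧ TypeCond M₂ M₁ A21 ∧
  A12 [t] [u] ∧
  BaseCond M₁ M₂ Θ A12 ∧ BaseCond M₂ M₁ Θ A21 ∧
  StepCond M₁ M₂ k A12 A21 ∧ StepCond M₂ M₁ k A21 A12 ∧
  (if boxOne then Box1Cond M₁ M₂ k A12 ∧ Box1Cond M₂ M₁ k A21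
   else Box2Cond M₁ M₂ k A12 ∧ Box2Cond M₂ M₁ k A21) ∧
  Diam1Cond M₁ M₂ k A12 ∧ Diam1Cond M₂ M₁ k A21

/-- An (i,2)-modal ⟨(M₁,t),(M₂,u)⟩_k-asimulation (j = 2): an ordered pair
(A, B) of relations, each given by its two directed components. -/
def IsKAsimD2 (boxOne : Bool) (Θ : Set ℕ) (M₁ M₂ : Model) (t : M₁.U) (u : M₂.U) (k : ℕ)
    (A12 : List M₁.U → List M₂.U → Prop) (A21 : List M₂.U → List M₁.U → Prop)
    (B12 : List M₁.U → List M₂.U → Prop) (B21 : List M₂.U → List M₁.U → Prop) : Prop :=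
  TypeCond M₁ M₂ A12 ∧ TypeCond M₂ M₁ A21 ∧
  TypeCond M₁ M₂ B12 ∧ TypeCond M₂ M₁ B21 ∧
  A12 [t] [u] ∧
  BaseCond M₁ M₂ Θ A12 ∧ BaseCond M₂ M₁ Θ A21 ∧
  StepCond M₁ M₂ k A12 A21 ∧ StepCond M₂ M₁ k A21 A12 ∧
  (if boxOne then Box1Cond M₁ M₂ k A12 ∧ Box1Cond M₂ M₁ k A21
   else Box2Cond M₁ M₂ k A12 ∧ Box2Cond M₂ M₁ k A21) ∧
  Diam2aCond M₁ M₂ k A12 B12 ∧ Diam2aCond M₂ M₁ k A21 B21 ∧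
  Diam2bCond M₁ M₂ k B12 A12 ∧ Diam2bCond M₂ M₁ k B21 A21

/-- φ(x) is invariant with respect to (i,1)-modal k-asimulations. -/
def KInvariantD1 (boxOne : Bool) (x : ℕ) (φ : FOForm) (k : ℕ) : Prop :=
  ∀ Θ : Set ℕ, (φ.predLetters : Set ℕ) ⊆ Θ →
  ∀ (M₁ M₂ : Model) (t : M₁.U) (u : M₂.U)
    (A12 : List M₁.U → List M₂.U → Prop) (A21 : List M₂.U → List M₁.U → Prop),
    IsKAsimD1 boxOne Θ M₁ M₂ t u k A12 A21 →
    ∀ (a : M₁.U) (b : M₂.U), A12 [a] [b] → SatAt M₁ a x φ → SatAt M₂ b x φ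

/-- φ(x) is invariant with respect to (i,2)-modal k-asimulations. -/
def KInvariantD2 (boxOne : Bool) (x : ℕ) (φ : FOForm) (k : ℕ) : Prop :=
  ∀ Θ : Set ℕ, (φ.predLetters : Set ℕ) ⊆ Θ →
  ∀ (M₁ M₂ : Model) (t : M₁.U) (u : M₂.U)
    (A12 : List M₁.U → List M₂.U → Prop) (A21 : List M₂.U → List M₁.U → Prop)
    (B12 : List M₁.U → List M₂.U → Prop) (B21 : List M₂.U → List M₁.U → Prop),
    IsKAsimD2 boxOne Θ M₁ M₂ t u k A12 A21 B12 B21 →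
    ∀ (a : M₁.U) (b : M₂.U), A12 [a] [b] → SatAt M₁ a x φ → SatAt M₂ b x φ

/-! ### Conditions for asimulations *simpliciter* (relations between elements). -/

section ElemConds

variable (N P : Model)

/-- (base). -/
def BaseCondE (Θ : Set ℕ) (A : N.U → P.U → Prop) : Prop :=
  ∀ (a : N.U) (b : P.U), A a b → ∀ n ∈ Θ, N.pred n a → P.pred n b

/-- (step). -/
def StepCondE (A : N.U → P.U → Prop) (Arev : P.U → N.U → Prop) : Prop :=
  ∀ (a : N.U) (b d : P.U), A a b → P.rel b d →
    ∃ c : N.U, N.rel a c ∧ A c d ∧ Arev d c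

/-- (box-1). -/
def Box1CondE (A : N.U → P.U → Prop) : Prop :=
  ∀ (a : N.U) (b d : P.U), A a b → P.relBox b d →
    ∃ c : N.U, N.relBox a c ∧ A c d

/-- (box-2). -/
def Box2CondE (A : N.U → P.U → Prop) : Prop :=
  ∀ (a : N.U) (b d f : P.U), A a b → P.rel b d → P.relBox d f →
    ∃ c e : N.U, N.rel a c ∧ N.relBox c e ∧ A e f

/-- (diam-1). -/
def Diam1CondE (A : N.U → P.U → Prop) : Prop :=
  ∀ (a c : N.U) (b : P.U), A a b → N.relDiam a c →
    ∃ d : P.U, P.relDiam b d ∧ A c d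

/-- (diam-2(1)). -/
def Diam2aCondE (A B : N.U → P.U → Prop) : Prop :=
  ∀ (a : N.U) (b d : P.U), A a b → P.rel b d →
    ∃ c : N.U, N.rel a c ∧ B c d

/-- (diam-2(2)). -/
def Diam2bCondE (B A : N.U → P.U → Prop) : Prop :=
  ∀ (a c : N.U) (b : P.U), B a b → N.relDiam a c →
    ∃ d : P.U, P.relDiam b d ∧ A c d

end ElemConds

/-- An (i,1)-modal ⟨(M₁,t),(M₂,u)⟩-asimulation (j = 1). -/
def IsAsimD1 (boxOne : Bool) (Θ : Set ℕ) (M₁ M₂ : Model) (t : M₁.U) (u : M₂.U)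
    (A12 : M₁.U → M₂.U → Prop) (A21 : M₂.U → M₁.U → Prop) : Prop :=
  A12 t u ∧
  BaseCondE M₁ M₂ Θ A12 ∧ BaseCondE M₂ M₁ Θ A21 ∧
  StepCondE M₁ M₂ A12 A21 ∧ StepCondE M₂ M₁ A21 A12 ∧
  (if boxOne then Box1CondE M₁ M₂ A12 ∧ Box1CondE M₂ M₁ A21
   else Box2CondE M₁ M₂ A12 ∧ Box2CondE M₂ M₁ A21) ∧
  Diam1CondE M₁ M₂ A12 ∧ Diam1CondE M₂ M₁ A21

/-- An (i,2)-modal ⟨(M₁,t),(M₂,u)⟩-asimulation (j = 2). -/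
def IsAsimD2 (boxOne : Bool) (Θ : Set ℕ) (M₁ M₂ : Model) (t : M₁.U) (u : M₂.U)
    (A12 : M₁.U → M₂.U → Prop) (A21 : M₂.U → M₁.U → Prop)
    (B12 : M₁.U → M₂.U → Prop) (B21 : M₂.U → M₁.U → Prop) : Prop :=
  A12 t u ∧
  BaseCondE M₁ M₂ Θ A12 ∧ BaseCondE M₂ M₁ Θ A21 ∧
  StepCondE M₁ M₂ A12 A21 ∧ StepCondE M₂ M₁ A21 A12 ∧
  (if boxOne then Box1CondE M₁ M₂ A12 ∧ Box1CondE M₂ M₁ A21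
   else Box2CondE M₁ M₂ A12 ∧ Box2CondE M₂ M₁ A21) ∧
  Diam2aCondE M₁ M₂ A12 B12 ∧ Diam2aCondE M₂ M₁ A21 B21 ∧
  Diam2bCondE M₁ M₂ B12 A12 ∧ Diam2bCondE M₂ M₁ B21 A21

/-- φ(x) is invariant with respect to (i,1)-modal asimulations. -/
def InvariantD1 (boxOne : Bool) (x : ℕ) (φ : FOForm) : Prop :=
  ∀ Θ : Set ℕ, (φ.predLetters : Set ℕ) ⊆ Θ →
  ∀ (M₁ M₂ : Model) (t : M₁.U) (u : M₂.U)
    (A12 : M₁.U → M₂.U → Prop) (A21 : M₂.U → M₁.U → Prop),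
    IsAsimD1 boxOne Θ M₁ M₂ t u A12 A21 →
    ∀ (a : M₁.U) (b : M₂.U), A12 a b → SatAt M₁ a x φ → SatAt M₂ b x φ

/-- φ(x) is invariant with respect to (i,2)-modal asimulations. -/
def InvariantD2 (boxOne : Bool) (x : ℕ) (φ : FOForm) : Prop :=
  ∀ Θ : Set ℕ, (φ.predLetters : Set ℕ) ⊆ Θ →
  ∀ (M₁ M₂ : Model) (t : M₁.U) (u : M₂.U)
    (A12 : M₁.U → M₂.U → Prop) (A21 : M₂.U → M₁.U → Prop)
    (B12 : M₁.U → M₂.U → Prop) (B21 : M₂.U → M₁.U → Prop),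
    IsAsimD2 boxOne Θ M₁ M₂ t u A12 A21 B12 B21 →
    ∀ (a : M₁.U) (b : M₂.U), A12 a b → SatAt M₁ a x φ → SatAt M₂ b x φ

/-! ### Types, complete conjunctions, ω-saturation. -/

/-- `int(φ,x,l)`: the set of (2,2)-standard x-translations of modal
intuitionistic formulas which are (Σ_φ,x,l)-formulas. -/
def intSet (φ : FOForm) (x l : ℕ) : Set FOForm :=
  {ψ | (∃ I : MForm, ψ = ST false false I x) ∧
    ψ.predLetters ⊆ φ.predLetters ∧ ψ.freeVars ⊆ {x} ∧ ψ.degree ≤ l}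

/-- `tp_l(φ(x),M,a)`. -/
def tpSet (φ : FOForm) (x l : ℕ) (M : Model) (a : M.U) : Set FOForm :=
  {ψ | ψ ∈ intSet φ x l ∧ SatAt M a x ψ}

/-- Conjunction of a nonempty list of formulas. -/
def listConj : FOForm → List FOForm → FOForm
  | ψ, [] => ψ
  | ψ, χ :: L => FOForm.conj ψ (listConj χ L)

/-- Ψ(x) is a complete (φ,x,k)-conjunction. -/
def IsCompleteConj (φ : FOForm) (x k : ℕ) (Ψ : FOForm) : Prop :=
  (∃ (ψ₀ : FOForm) (L : List FOForm), ψ₀ ∈ intSet φ x k ∧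
    (∀ χ ∈ L, χ ∈ intSet φ x k) ∧ Ψ = listConj ψ₀ L) ∧
  ∃ (M : Model) (a : M.U), SatAt M a x (FOForm.conj Ψ φ) ∧
    ∀ ψ ∈ tpSet φ x k M a, Entails Ψ ψ

/-- `int_x(Θ)` for the (i,j)-standard translation. -/
def intX (Θ : Set ℕ) (boxOne diamOne : Bool) (x : ℕ) : Set FOForm :=
  {ψ | (∃ I : MForm, ψ = ST boxOne diamOne I x) ∧ (ψ.predLetters : Set ℕ) ⊆ Θ}

/-- `tp_x(M,t)` for the (i,j)-standard translation. -/
def tpX (Θ : Set ℕ) (boxOne diamOne : Bool) (x : ℕ) (M : Model) (t : M.U) : Set FOForm :=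
  {ψ | ψ ∈ intX Θ boxOne diamOne x ∧ SatAt M t x ψ}

/-- `imp_x(M,t) = ⋂ { t̄p_x(M,u) : t R_◇ u }` (for the (2,2)-translation). -/
def impX (Θ : Set ℕ) (x : ℕ) (M : Model) (t : M.U) : Set FOForm :=
  {ψ | ψ ∈ intX Θ false false x ∧ ∀ u : M.U, M.relDiam t u → ¬ SatAt M u x ψ}

/-- ω-saturation: for every finite tuple of parameters (the first `n` values of
an assignment `α`) and every set `Γ` of formulas with finitely many free
variables beyond the parameters, if `Γ` is consistent with the first-order
theory of `[M,ā]` (i.e. satisfiable together with it in some model), then `Γ`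
is realized in `[M,ā]`. -/
def OmegaSaturated (M : Model) : Prop :=
  ∀ (n : ℕ) (α : ℕ → M.U) (Γ : Set FOForm),
    (∃ k : ℕ, ∀ γ ∈ Γ, γ.freeVars ⊆ Finset.range (n + k)) →
    (∃ (N : Model) (β : ℕ → N.U),
      (∀ ψ : FOForm, ψ.freeVars ⊆ Finset.range n → Sat M ψ α → Sat N ψ β) ∧
      ∀ γ ∈ Γ, Sat N γ β) →
    ∃ α' : ℕ → M.U, (∀ i < n, α' i = α i) ∧ ∀ γ ∈ Γ, Sat M γ α'

/-! ### Relativization to a class κ of models. -/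

/-- κ(Θ) is first-order axiomatizable for every finite Θ (with R ∈ Θ): for
every finite set `S` of unary predicate letters there is a set of Θ-sentences
axiomatizing membership in κ. -/
def FinAxiomatizable (κ : Set Model) : Prop :=
  ∀ S : Finset ℕ, ∃ Ax : Set FOForm,
    (∀ ψ ∈ Ax, ψ.freeVars = ∅ ∧ (ψ.predLetters : Set ℕ) ⊆ (S : Set ℕ)) ∧
    ∀ M : Model, M ∈ κ ↔ ∀ ψ ∈ Ax, ∀ α : ℕ → M.U, Sat M ψ α

/-- φ κ-follows from ψ: {ψ, ¬φ} is not κ-satisfiable. -/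
def KappaFollows (κ : Set Model) (ψ φ : FOForm) : Prop :=
  ¬ ∃ M : Model, M ∈ κ ∧ ∃ α : ℕ → M.U, Sat M ψ α ∧ ¬ Sat M φ α

/-- κ-equivalence of formulas. -/
def KappaEquiv (κ : Set Model) (φ ψ : FOForm) : Prop :=
  KappaFollows κ φ ψ ∧ KappaFollows κ ψ φ

/-- φ(x) is κ-invariant with respect to (i,1)-modal asimulations. -/
def KappaInvariantD1 (κ : Set Model) (boxOne : Bool) (x : ℕ) (φ : FOForm) : Prop :=
  ∀ Θ : Set ℕ, (φ.predLetters : Set ℕ) ⊆ Θ →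
  ∀ (M₁ M₂ : Model), M₁ ∈ κ → M₂ ∈ κ →
  ∀ (t : M₁.U) (u : M₂.U)
    (A12 : M₁.U → M₂.U → Prop) (A21 : M₂.U → M₁.U → Prop),
    IsAsimD1 boxOne Θ M₁ M₂ t u A12 A21 →
    ∀ (a : M₁.U) (b : M₂.U), A12 a b → SatAt M₁ a x φ → SatAt M₂ b x φ

/-- φ(x) is κ-invariant with respect to (i,2)-modal asimulations. -/
def KappaInvariantD2 (κ : Set Model) (boxOne : Bool) (x : ℕ) (φ : FOForm) : Prop :=
  ∀ Θ : Set ℕ, (φ.predLetters : Set ℕ) ⊆ Θ →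
  ∀ (M₁ M₂ : Model), M₁ ∈ κ → M₂ ∈ κ →
  ∀ (t : M₁.U) (u : M₂.U)
    (A12 : M₁.U → M₂.U → Prop) (A21 : M₂.U → M₁.U → Prop)
    (B12 : M₁.U → M₂.U → Prop) (B21 : M₂.U → M₁.U → Prop),
    IsAsimD2 boxOne Θ M₁ M₂ t u A12 A21 B12 B21 →
    ∀ (a : M₁.U) (b : M₂.U), A12 a b → SatAt M₁ a x φ → SatAt M₂ b x φ

/-- φ(x) is κ-invariant with respect to (i,j)-modal asimulations
(`diamOne = true` means j = 1). -/
def KappaInvariant (κ : Set Model) (boxOne diamOne : Bool) (x : ℕ) (φ : FOForm) : Prop :=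
  if diamOne then KappaInvariantD1 κ boxOne x φ else KappaInvariantD2 κ boxOne x φ


namespace MForm

/-- The propositional letters occurring in a modal formula. -/
def letters : MForm → Finset ℕ
  | bot => ∅
  | prop n => {n}
  | conj I J | disj I J | impl I J => I.letters ∪ J.letters
  | box I | diam I => I.letters

/-- Truth of a modal formula at a point of a model, by Kripke clauses: the relation that `ST`
internalizes, with the same convention on the flags `boxOne` and `diamOne`. -/
def Forces (boxOne diamOne : Bool) (M : Model) : MForm → M.U → Prop
  | bot, _ => False
  | prop n, a => M.pred n a
  | conj I J, a => I.Forces boxOne diamOne M a ∧ J.Forces boxOne diamOne M a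
  | disj I J, a => I.Forces boxOne diamOne M a ∨ J.Forces boxOne diamOne M a
  | impl I J, a => ∀ b, M.rel a b → I.Forces boxOne diamOne M b → J.Forces boxOne diamOne M b
  | box I, a =>
      if boxOne then ∀ b, M.relBox a b → I.Forces boxOne diamOne M b
      else ∀ b, M.rel a b → ∀ c, M.relBox b c → I.Forces boxOne diamOne M c
  | diam I, a =>
      if diamOne then ∃ b, M.relDiam a b ∧ I.Forces boxOne diamOne M b
      else ∀ b, M.rel a b → ∃ c, M.relDiam b c ∧ I.Forces boxOne diamOne M c

end MForm

/-- The modal formulas all of whose propositional letters lie in `Θ`. -/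
def modalFormulas (Θ : Set ℕ) : Set MForm :=
  {I | (I.letters : Set ℕ) ⊆ Θ}

section StandardTranslation

variable (i j : Bool)

theorem predLetters_ST (I : MForm) (x : ℕ) : (ST i j I x).predLetters = I.letters := by
  induction I generalizing x <;> cases i <;> cases j <;>
    simp_all [ST, FOForm.predLetters, MForm.letters]

theorem freeVars_ST_subset (I : MForm) (x : ℕ) : (ST i j I x).freeVars ⊆ {x} := by
  induction I generalizing x <;> cases i <;> cases j <;>
    simp only [ST, FOForm.freeVars, if_true, if_false, Bool.false_eq_true] <;> grind

variable {M N : Model}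

theorem sat_ST_iff (I : MForm) (x : ℕ) (α : ℕ → M.U) :
    Sat M (ST i j I x) α ↔ I.Forces i j M (α x) := by
  induction I generalizing x α <;> cases i <;> cases j <;>
    simp_all [ST, Sat, MForm.Forces, Model.relOf]

theorem satAt_ST_iff (I : MForm) (x : ℕ) (a : M.U) :
    SatAt M a x (ST i j I x) ↔ I.Forces i j M a := by
  simp only [SatAt, sat_ST_iff]
  exact ⟨fun h => h (fun _ => a) rfl, fun h α hα => hα ▸ h⟩

variable {Θ : Set ℕ} {x : ℕ}

theorem intX_eq_image : intX Θ i j x = (ST i j · x) '' modalFormulas Θ := by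
  ext ψ
  constructor
  · rintro ⟨⟨I, rfl⟩, hI⟩
    exact ⟨I, by simpa only [modalFormulas, Set.mem_ofPred_eq, predLetters_ST] using hI, rfl⟩
  · rintro ⟨I, hI, rfl⟩
    exact ⟨⟨I, rfl⟩, by simpa only [modalFormulas, Set.mem_ofPred_eq, predLetters_ST] using hI⟩

theorem tpX_subset_tpX_iff {a : M.U} {b : N.U} :
    tpX Θ i j x M a ⊆ tpX Θ i j x N b ↔
      ∀ I ∈ modalFormulas Θ, I.Forces i j M a → I.Forces i j N b := by
  simp only [tpX, intX_eq_image, Set.subset_def, Set.mem_ofPred_eq, and_imp, Set.forall_mem_image,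
    satAt_ST_iff]
  exact forall₂_congr fun I hI => by simp only [Set.mem_image_of_mem _ hI, true_and]

theorem impX_subset_impX_iff {a : M.U} {b : N.U} :
    impX Θ x N b ⊆ impX Θ x M a ↔
      ∀ I ∈ modalFormulas Θ, (∃ c, M.relDiam a c ∧ I.Forces false false M c) →
        ∃ d, N.relDiam b d ∧ I.Forces false false N d := by
  simp only [impX, intX_eq_image, Set.subset_def, Set.mem_ofPred_eq, and_imp, Set.forall_mem_image,
    satAt_ST_iff]
  exact forall₂_congr fun I hI => .trans
    (by simp only [Set.mem_image_of_mem _ hI, true_and, not_exists, not_and]) not_imp_not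

end StandardTranslation

section FiniteConnectives

variable {Θ : Set ℕ} {s : Set MForm} (i j : Bool)

theorem exists_forces_iff_forall_mem (hs : s.Finite) (hsΘ : s ⊆ modalFormulas Θ) :
    ∃ J ∈ modalFormulas Θ, ∀ (M : Model) (a : M.U),
      J.Forces i j M a ↔ ∀ I ∈ s, I.Forces i j M a := by
  induction s, hs using Set.Finite.induction_on with
  | empty => exact ⟨.impl .bot .bot, by simp [modalFormulas, MForm.letters],
      by simp [MForm.Forces]⟩
  | @insert I s _ _ ih =>
    obtain ⟨hI, hsΘ⟩ := Set.insert_subset_iff.1 hsΘ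
    obtain ⟨J, hJ, hJs⟩ := ih hsΘ
    exact ⟨.conj I J, by simp_all [modalFormulas, MForm.letters], by simp [MForm.Forces, hJs]⟩

theorem exists_forces_iff_exists_mem (hs : s.Finite) (hsΘ : s ⊆ modalFormulas Θ) :
    ∃ J ∈ modalFormulas Θ, ∀ (M : Model) (a : M.U),
      J.Forces i j M a ↔ ∃ I ∈ s, I.Forces i j M a := by
  induction s, hs using Set.Finite.induction_on with
  | empty => exact ⟨.bot, by simp [modalFormulas, MForm.letters], by simp [MForm.Forces]⟩
  | @insert I s _ _ ih =>
    obtain ⟨hI, hsΘ⟩ := Set.insert_subset_iff.1 hsΘ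
    obtain ⟨J, hJ, hJs⟩ := ih hsΘ
    exact ⟨.disj I J, by simp_all [modalFormulas, MForm.letters], by simp [MForm.Forces, hJs]⟩

end FiniteConnectives

section Ultrapower

variable {M : Model}

theorem sat_congr {φ : FOForm} {α β : ℕ → M.U} (h : ∀ v ∈ φ.freeVars, α v = β v) :
    Sat M φ α ↔ Sat M φ β := by
  have update_eq {α β : ℕ → M.U} {s : Finset ℕ} {w : ℕ} (h : ∀ v ∈ s \ {w}, α v = β v)
      (u : M.U) : ∀ v ∈ s, Function.update α w u v = Function.update β w u v := by
    grind [Function.update_apply]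
  induction φ generalizing α β with
  | falsum => rfl
  | pred n v | rel s v w => simp_all [Sat, FOForm.freeVars]
  | conj f g hf hg =>
    simp only [FOForm.freeVars, Finset.forall_mem_union] at h
    exact and_congr (hf h.1) (hg h.2)
  | disj f g hf hg =>
    simp only [FOForm.freeVars, Finset.forall_mem_union] at h
    exact or_congr (hf h.1) (hg h.2)
  | impl f g hf hg =>
    simp only [FOForm.freeVars, Finset.forall_mem_union] at h
    exact imp_congr (hf h.1) (hg h.2)
  | all w f hf => exact forall_congr' fun u => hf (update_eq h u)
  | ex w f hf => exact exists_congr fun u => hf (update_eq h u)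

theorem eventually_forall_iff_forall_fun {ι : Type*} {κ : ι → Type*} [∀ k, Nonempty (κ k)]
    {F : Filter ι} {p : ∀ k, κ k → Prop} :
    (∀ᶠ k in F, ∀ u, p k u) ↔ ∀ u : ∀ k, κ k, ∀ᶠ k in F, p k (u k) := by
  refine ⟨fun h u => h.mono fun k hk => hk (u k), fun h => ?_⟩
  have drinker (k : ι) : ∃ u, p k u → ∀ v, p k v := forall_imp_iff_exists_imp.1 id
  choose u hu using drinker
  exact (h u).mono hu

/-- The ultrapower of a model. The language has no identity, so functions are not identified
modulo the ultrafilter. -/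
def Model.ultrapower (M : Model) {ι : Type} (F : Ultrafilter ι) : Model where
  U := ι → M.U
  rel f g := ∀ᶠ k in F, M.rel (f k) (g k)
  relBox f g := ∀ᶠ k in F, M.relBox (f k) (g k)
  relDiam f g := ∀ᶠ k in F, M.relDiam (f k) (g k)
  pred n f := ∀ᶠ k in F, M.pred n (f k)

theorem sat_ultrapower_iff {ι : Type} {F : Ultrafilter ι} {φ : FOForm} {β : ℕ → ι → M.U} :
    Sat (M.ultrapower F) φ β ↔ ∀ᶠ k in F, Sat M φ (fun v => β v k) := by
  have : Nonempty M.U := F.neBot.nonempty.map (β 0)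
  have update_apply (β : ℕ → ι → M.U) (w : ℕ) (u : ι → M.U) (k : ι) :
      (fun v => Function.update β w u v k) = Function.update (fun v => β v k) w (u k) :=
    funext (Function.apply_update (fun _ f => f k) β w u)
  induction φ generalizing β with
  | falsum => simp [Sat, F.neBot.ne]
  | pred n v => rfl
  | rel s v w => cases s <;> rfl
  | conj f g hf hg => simp only [Sat, hf, hg, Filter.eventually_and]
  | disj f g hf hg => simp only [Sat, hf, hg, Ultrafilter.eventually_or]
  | impl f g hf hg => simp only [Sat, hf, hg, Ultrafilter.eventually_imp]
  | all w f hf =>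
    refine .trans ?_ (eventually_forall_iff_forall_fun (κ := fun _ => M.U)).symm
    exact forall_congr' fun u : ι → M.U =>
      (hf (β := Function.update β w u)).trans (by simp only [update_apply])
  | ex w f hf =>
    refine .trans ?_ (Filter.skolem (α := fun _ => M.U)).symm
    exact exists_congr fun u : ι → M.U =>
      (hf (β := Function.update β w u)).trans (by simp only [update_apply])

end Ultrapower

section Saturation

variable {M : Model}

theorem OmegaSaturated.exists_forall_sat_of_finset (hM : OmegaSaturated M) {ι : Type} {n m : ℕ}
    {α : ℕ → M.U} {γ : ι → FOForm} (hγ : ∀ k, (γ k).freeVars ⊆ Finset.range (n + m))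
    (hfin : ∀ s : Finset ι, ∃ β : ℕ → M.U, (∀ v < n, β v = α v) ∧ ∀ k ∈ s, Sat M (γ k) β) :
    ∃ β : ℕ → M.U, (∀ v < n, β v = α v) ∧ ∀ k, Sat M (γ k) β := by
  choose β hβα hβ using hfin
  let F : Ultrafilter (Finset ι) := .of Filter.atTop
  have theory_preserved (ψ : FOForm) (hψ : ψ.freeVars ⊆ Finset.range n) (h : Sat M ψ α) :
      Sat (M.ultrapower F) ψ fun v s => β s v :=
    sat_ultrapower_iff.2 <| .of_forall fun s =>
      (sat_congr fun v hv => hβα s v (Finset.mem_range.1 (hψ hv))).2 h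
  have family_realized (k : ι) : Sat (M.ultrapower F) (γ k) fun v s => β s v := by
    have : ∀ᶠ s in (F : Filter (Finset ι)), {k} ⊆ s :=
      Ultrafilter.of_le _ (Filter.eventually_ge_atTop ({k} : Finset ι))
    exact sat_ultrapower_iff.2 <| this.mono fun s hs => hβ s k (Finset.singleton_subset_iff.1 hs)
  simpa using hM n α (Set.range γ) ⟨m, by simpa using hγ⟩
    ⟨M.ultrapower F, _, theory_preserved, by simpa using family_realized⟩

/-- First-order definability, without parameters, of a binary relation on a model. Unary
predicates `p` are treated as the relations `fun _ c => p c`. -/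
def DefinableRel (M : Model) (S : M.U → M.U → Prop) : Prop :=
  ∃ φ : FOForm, φ.freeVars ⊆ {0, 1} ∧ ∀ α, Sat M φ α ↔ S (α 0) (α 1)

theorem definableRel_relOf (s : RelSym) : DefinableRel M (M.relOf s) :=
  ⟨.rel s 0 1, by simp [FOForm.freeVars], fun _ => .rfl⟩

theorem definableRel_comp_relOf (s s' : RelSym) :
    DefinableRel M (Relation.Comp (M.relOf s) (M.relOf s')) :=
  ⟨.ex 2 (.conj (.rel s 0 2) (.rel s' 2 1)), by grind [FOForm.freeVars],
    fun α => by simp [Sat, Relation.Comp]⟩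

theorem definableRel_forces (i j : Bool) (I : MForm) :
    DefinableRel M fun _ c => I.Forces i j M c :=
  ⟨ST i j I 1, (freeVars_ST_subset i j I 1).trans (by simp), sat_ST_iff i j I 1⟩

theorem definableRel_exists_relOf_and_forces (i j : Bool) (s : RelSym) (I : MForm) :
    DefinableRel M fun _ c => ∃ u, M.relOf s c u ∧ I.Forces i j M u := by
  refine ⟨.ex 2 (.conj (.rel s 1 2) (ST i j I 2)), ?_, fun α => by simp [Sat, sat_ST_iff]⟩
  have := freeVars_ST_subset i j I 2
  simp only [FOForm.freeVars]
  grind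

theorem DefinableRel.not {S : M.U → M.U → Prop} (hS : DefinableRel M S) :
    DefinableRel M fun a c => ¬ S a c := by
  obtain ⟨φ, hφ, hφS⟩ := hS
  exact ⟨.impl φ .falsum, by simpa [FOForm.freeVars] using hφ, fun α => by simp [Sat, hφS]⟩

theorem DefinableRel.iff_const {S : M.U → M.U → Prop} (hS : DefinableRel M S) (q : Prop) :
    DefinableRel M fun a c => S a c ↔ q := by
  by_cases hq : q
  · simpa [hq] using hS
  · simpa [hq] using hS.not

theorem OmegaSaturated.exists_forall_mem_of_finite (hM : OmegaSaturated M) {ι : Type}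
    {S : M.U → M.U → Prop} (hS : DefinableRel M S)
    {r : ι → M.U → M.U → Prop} (hr : ∀ k, DefinableRel M (r k)) {T : Set ι} {a : M.U}
    (hfin : ∀ s ⊆ T, s.Finite → ∃ c, S a c ∧ ∀ k ∈ s, r k a c) :
    ∃ c, S a c ∧ ∀ k ∈ T, r k a c := by
  obtain ⟨φ, hφ, hφS⟩ := hS
  choose ψ hψ hψr using hr
  obtain ⟨β, hβa, hβ⟩ := hM.exists_forall_sat_of_finset (n := 1) (m := 1) (α := fun _ => a)
    (γ := fun o : Option T => o.elim φ (ψ ·)) (by rintro (_ | k); exacts [hφ, hψ k]) fun s => by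
      obtain ⟨c, hac, hc⟩ := hfin ((↑) '' (s.eraseNone : Set T)) (by simp)
        (s.eraseNone.finite_toSet.image _)
      refine ⟨fun v => if v = 0 then a else c, by simp_all, ?_⟩
      rintro (_ | k) hk
      · simpa [hφS] using hac
      · simpa [hψr] using hc k (by simpa using hk)
  have hβ0 : β 0 = a := hβa 0 one_pos
  exact ⟨β 1, hβ0 ▸ (hφS β).1 (hβ none), fun k hk => hβ0 ▸ (hψr k β).1 (hβ (some ⟨k, hk⟩))⟩

end Saturation

section AsimulationConditions

variable {M N : Model} (Θ : Set ℕ) (i j : Bool) (x : ℕ)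

theorem baseCondE_tpX :
    BaseCondE M N Θ (fun a b => tpX Θ i j x M a ⊆ tpX Θ i j x N b) := by
  intro a b hab n hn hna
  exact (tpX_subset_tpX_iff i j).1 hab (.prop n) (by simpa [modalFormulas, MForm.letters]) hna

theorem stepCondE_tpX (hM : OmegaSaturated M) :
    StepCondE M N (fun a b => tpX Θ i j x M a ⊆ tpX Θ i j x N b)
      (fun b a => tpX Θ i j x N b ⊆ tpX Θ i j x M a) := by
  intro a b d hab hbd
  simp only [tpX_subset_tpX_iff] at hab ⊢
  suffices ∃ c, M.rel a c ∧ ∀ I ∈ modalFormulas Θ, I.Forces i j M c ↔ I.Forces i j N d by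
    obtain ⟨c, hac, hc⟩ := this
    exact ⟨c, hac, fun I hI => (hc I hI).1, fun I hI => (hc I hI).2⟩
  refine hM.exists_forall_mem_of_finite (definableRel_relOf .r)
    (fun I => (definableRel_forces i j I).iff_const (I.Forces i j N d)) fun s hsΘ hs => ?_
  obtain ⟨P, hPΘ, hP⟩ := exists_forces_iff_forall_mem i j (s := {I ∈ s | I.Forces i j N d})
    (hs.sep _) ((Set.sep_subset _ _).trans hsΘ)
  obtain ⟨Q, hQΘ, hQ⟩ := exists_forces_iff_exists_mem i j (s := {I ∈ s | ¬ I.Forces i j N d})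
    (hs.sep _) ((Set.sep_subset _ _).trans hsΘ)
  have not_forces_b : ¬ (MForm.impl P Q).Forces i j N b := fun h => by
    obtain ⟨I, hI, hId⟩ := (hQ N d).1 (h d hbd ((hP N d).2 fun I hI => hI.2))
    exact hI.2 hId
  have not_forces_a : ¬ (MForm.impl P Q).Forces i j M a :=
    mt (hab _ (by simp_all [modalFormulas, MForm.letters])) not_forces_b
  simp only [MForm.Forces, not_forall] at not_forces_a
  obtain ⟨c, hac, hPc, hQc⟩ := not_forces_a
  refine ⟨c, hac, fun I hI => ⟨fun hIc => ?_, fun hId => (hP M c).1 hPc I ⟨hI, hId⟩⟩⟩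
  by_contra hId
  exact hQc ((hQ M c).2 ⟨I, ⟨hI, hId⟩, hIc⟩)

theorem box2CondE_tpX (hM : OmegaSaturated M) :
    Box2CondE M N (fun a b => tpX Θ false j x M a ⊆ tpX Θ false j x N b) := by
  intro a b d f hab hbd hdf
  simp only [tpX_subset_tpX_iff] at hab ⊢
  obtain ⟨e, ⟨c, hac, hce⟩, he⟩ := hM.exists_forall_mem_of_finite (a := a)
    (T := {I ∈ modalFormulas Θ | ¬ I.Forces false j N f}) (definableRel_comp_relOf .r .box)
    (fun I => (definableRel_forces false j I).not) fun s hsT hs => by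
      obtain ⟨J, hJΘ, hJ⟩ := exists_forces_iff_exists_mem false j hs fun I hI => (hsT hI).1
      have not_forces_b : ¬ J.box.Forces false j N b := fun h => by
        obtain ⟨I, hI, hIf⟩ := (hJ N f).1 (h d hbd f hdf)
        exact (hsT hI).2 hIf
      have not_forces_a : ¬ J.box.Forces false j M a := mt (hab J.box hJΘ) not_forces_b
      simp only [MForm.Forces, Bool.false_eq_true, if_false, not_forall] at not_forces_a
      obtain ⟨c, hac, e, hce, hJe⟩ := not_forces_a
      exact ⟨e, ⟨c, hac, hce⟩, fun I hI hIe => hJe ((hJ M e).2 ⟨I, hI, hIe⟩)⟩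
  exact ⟨c, e, hac, hce, fun I hI => not_imp_not.1 fun hIf => he I ⟨hI, hIf⟩⟩

theorem diam2aCondE_tpX_impX (hM : OmegaSaturated M) :
    Diam2aCondE M N (fun a b => tpX Θ false false x M a ⊆ tpX Θ false false x N b)
      (fun a b => impX Θ x N b ⊆ impX Θ x M a) := by
  intro a b d hab hbd
  simp only [tpX_subset_tpX_iff, impX_subset_impX_iff] at hab ⊢
  obtain ⟨c, hac, hc⟩ := hM.exists_forall_mem_of_finite (a := a)
    (T := {I ∈ modalFormulas Θ | ¬ ∃ u, N.relDiam d u ∧ I.Forces false false N u})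
    (definableRel_relOf .r)
    (fun I => (definableRel_exists_relOf_and_forces false false .diam I).not) fun s hsT hs => by
      obtain ⟨J, hJΘ, hJ⟩ := exists_forces_iff_exists_mem false false hs fun I hI => (hsT hI).1
      have not_forces_b : ¬ J.diam.Forces false false N b := fun h => by
        obtain ⟨u, hdu, hJu⟩ := h d hbd
        obtain ⟨I, hI, hIu⟩ := (hJ N u).1 hJu
        exact (hsT hI).2 ⟨u, hdu, hIu⟩
      have not_forces_a : ¬ J.diam.Forces false false M a := mt (hab J.diam hJΘ) not_forces_b
      simp only [MForm.Forces, Bool.false_eq_true, if_false, not_forall] at not_forces_a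
      obtain ⟨c, hac, hJc⟩ := not_forces_a
      exact ⟨c, hac, fun I hI ⟨u, hcu, hIu⟩ => hJc ⟨u, hcu, (hJ M u).2 ⟨I, hI, hIu⟩⟩⟩
  exact ⟨c, hac, fun I hI => not_imp_not.1 fun hId => hc I ⟨hI, hId⟩⟩

theorem diam2bCondE_impX_tpX (hN : OmegaSaturated N) :
    Diam2bCondE M N (fun a b => impX Θ x N b ⊆ impX Θ x M a)
      (fun a b => tpX Θ false false x M a ⊆ tpX Θ false false x N b) := by
  intro a c b hab hac
  simp only [tpX_subset_tpX_iff, impX_subset_impX_iff] at hab ⊢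
  obtain ⟨d, hbd, hd⟩ := hN.exists_forall_mem_of_finite (a := b)
    (T := {I ∈ modalFormulas Θ | I.Forces false false M c}) (definableRel_relOf .diam)
    (definableRel_forces false false) fun s hsT hs => by
      obtain ⟨J, hJΘ, hJ⟩ := exists_forces_iff_forall_mem false false hs fun I hI => (hsT hI).1
      obtain ⟨d, hbd, hJd⟩ := hab J hJΘ ⟨c, hac, (hJ M c).2 fun I hI => (hsT hI).2⟩
      exact ⟨d, hbd, (hJ N d).1 hJd⟩
  exact ⟨d, hbd, fun I hI hIc => hd I ⟨hI, hIc⟩⟩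

end AsimulationConditions

/-- **Key Lemma 3 (case (2,2)).**  If M₁, M₂ are ω-saturated Θ-models and
tp_x(M₁,t) ⊆ tp_x(M₂,t'), then the pair (A,B) with
a A b ⇔ tp_x(M_p,a) ⊆ tp_x(M_q,b) and a B b ⇔ imp_x(M_q,b) ⊆ imp_x(M_p,a)
is a (2,2)-modal ⟨(M₁,t),(M₂,t')⟩-asimulation. -/
theorem statement_14 (Θ : Set ℕ) (M₁ M₂ : Model)
    (h1 : OmegaSaturated M₁) (h2 : OmegaSaturated M₂) (x : ℕ)
    (t : M₁.U) (t' : M₂.U)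
    (h : tpX Θ false false x M₁ t ⊆ tpX Θ false false x M₂ t') :
    IsAsimD2 false Θ M₁ M₂ t t'
      (fun a b => tpX Θ false false x M₁ a ⊆ tpX Θ false false x M₂ b)
      (fun b a => tpX Θ false false x M₂ b ⊆ tpX Θ false false x M₁ a)
      (fun a b => impX Θ x M₂ b ⊆ impX Θ x M₁ a)
      (fun b a => impX Θ x M₁ a ⊆ impX Θ x M₂ b) := by
  exact ⟨h, baseCondE_tpX Θ _ _ x, baseCondE_tpX Θ _ _ x,
    stepCondE_tpX Θ _ _ x h1, stepCondE_tpX Θ _ _ x h2,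
    ⟨box2CondE_tpX Θ _ x h1, box2CondE_tpX Θ _ x h2⟩,
    diam2aCondE_tpX_impX Θ x h1, diam2aCondE_tpX_impX Θ x h2,
    diam2bCondE_impX_tpX Θ x h2, diam2bCondE_impX_tpX Θ x h1⟩

end ModalIntAsim
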